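/- arXiv:1411.6672 — 2 statements merged into one kernel-verified Lean document; each statement's English description precedes it below -/
import Mathlib

section
/- Let S₀ ⊂ ℤ² be a shape (a finite nonempty subset of ℤ² that is connected with respect to grid adjacency), and let v ∈ ℤ² be a nonzero vector. Let S₁ = S₀ + v and S₂ = S₁ + v. Then there exists a connected component of S₂ \ S₁ (with respect to grid adjacency) that does not intersect S₀. -/
/-- Grid adjacency on ℤ²: two points are adjacent iff their ℓ¹-distance is 1. -/
def GridAdj (p q : ℤ × ℤ) : Prop := |p.1 - q.1| + |p.2 - q.2| = 1

/-- A subset of ℤ² is grid-connected if any two of its points are joined by a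
path of adjacent points staying inside the set. -/
def GridConnected (S : Set (ℤ × ℤ)) : Prop :=
  ∀ p ∈ S, ∀ q ∈ S,
    Relation.ReflTransGen (fun a b => GridAdj a b ∧ a ∈ S ∧ b ∈ S) p q

/-- `C` is a connected component of `S`: a maximal nonempty connected subset. -/
def IsGridComponent (S C : Set (ℤ × ℤ)) : Prop :=
  C ⊆ S ∧ C.Nonempty ∧ GridConnected C ∧
    ∀ D : Set (ℤ × ℤ), C ⊆ D → D ⊆ S → GridConnected D → D = C

/-- Translate of a subset of ℤ² by a vector. -/
def setTranslate (S : Set (ℤ × ℤ)) (v : ℤ × ℤ) : Set (ℤ × ℤ) := (· + v) '' S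

def cu (t : ℤ) : ℤ := if 0 ≤ t then 1 else 0

def cg (x : ℤ × ℤ) : ℤ := if 0 < x.1 then cu x.2 else 0

def cc (x y : ℤ × ℤ) : ℤ := if 0 < x.1 ∧ 0 < y.1 then cu y.2 - cu x.2 else 0

theorem gridAdj_cases {p q : ℤ × ℤ} (h : GridAdj p q) :
    ∃ e f : ℤ, q = (p.1 + e, p.2 + f) ∧
      ((e = 1 ∧ f = 0) ∨ (e = -1 ∧ f = 0) ∨ (e = 0 ∧ f = 1) ∨ (e = 0 ∧ f = -1)) := by
  refine ⟨q.1 - p.1, q.2 - p.2, by ext <;> simp, ?_⟩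
  unfold GridAdj at h
  rcases abs_cases (p.1 - q.1) with h1 | h1 <;> rcases abs_cases (p.2 - q.2) with h2 | h2 <;> omega

set_option maxHeartbeats 4000000 in
theorem cc_cell (x1 x2 e1 e2 f1 f2 : ℤ)
    (he : (e1 = 1 ∧ e2 = 0) ∨ (e1 = -1 ∧ e2 = 0) ∨ (e1 = 0 ∧ e2 = 1) ∨ (e1 = 0 ∧ e2 = -1))
    (hf : (f1 = 1 ∧ f2 = 0) ∨ (f1 = -1 ∧ f2 = 0) ∨ (f1 = 0 ∧ f2 = 1) ∨ (f1 = 0 ∧ f2 = -1))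
    (h0 : ¬ (x1 = 0 ∧ x2 = 0)) (h1 : ¬ (x1 + e1 = 0 ∧ x2 + e2 = 0))
    (h2 : ¬ (x1 - f1 = 0 ∧ x2 - f2 = 0)) (h3 : ¬ (x1 + e1 - f1 = 0 ∧ x2 + e2 - f2 = 0)) :
    cc (x1, x2) (x1 + e1, x2 + e2) + cc (x1 + e1, x2 + e2) (x1 + e1 - f1, x2 + e2 - f2)
     = cc (x1, x2) (x1 - f1, x2 - f2) + cc (x1 - f1, x2 - f2) (x1 + e1 - f1, x2 + e2 - f2) := by
  simp only [cc, cu]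
  rcases he with ⟨rfl, rfl⟩ | ⟨rfl, rfl⟩ | ⟨rfl, rfl⟩ | ⟨rfl, rfl⟩ <;>
  rcases hf with ⟨rfl, rfl⟩ | ⟨rfl, rfl⟩ | ⟨rfl, rfl⟩ | ⟨rfl, rfl⟩ <;>
  (split_ifs <;> omega)

theorem cc_lower (a b x1 x2 e1 e2 : ℤ) (ha : 0 < a) (hb : 0 ≤ b)
    (he : (e1 = 1 ∧ e2 = 0) ∨ (e1 = -1 ∧ e2 = 0) ∨ (e1 = 0 ∧ e2 = 1) ∨ (e1 = 0 ∧ e2 = -1))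
    (h0 : ¬ (x1 = 0 ∧ x2 = 0)) (h1 : ¬ (x1 + e1 = 0 ∧ x2 + e2 = 0))
    (hx : a * x2 - b * x1 ≤ 0) (hy : a * (x2 + e2) - b * (x1 + e1) ≤ 0) :
    cc (x1, x2) (x1 + e1, x2 + e2) = cg (x1 + e1, x2 + e2) - cg (x1, x2) := by
  have k1 : x1 ≤ 0 → x2 ≤ 0 := by intro h; nlinarith [mul_nonneg hb (neg_nonneg.2 h)]
  have k2 : x1 + e1 ≤ 0 → x2 + e2 ≤ 0 := by
    intro h; nlinarith [mul_nonneg hb (neg_nonneg.2 h)]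
  simp only [cc, cg, cu]
  rcases he with ⟨rfl, rfl⟩ | ⟨rfl, rfl⟩ | ⟨rfl, rfl⟩ | ⟨rfl, rfl⟩ <;>
  (split_ifs <;> omega)

theorem cc_upper (a b x1 x2 e1 e2 : ℤ) (ha : 0 < a) (hb : 0 ≤ b)
    (he : (e1 = 1 ∧ e2 = 0) ∨ (e1 = -1 ∧ e2 = 0) ∨ (e1 = 0 ∧ e2 = 1) ∨ (e1 = 0 ∧ e2 = -1))
    (hx : 0 ≤ a * x2 - b * x1) (hy : 0 ≤ a * (x2 + e2) - b * (x1 + e1)) :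
    cc (x1, x2) (x1 + e1, x2 + e2) = 0 := by
  have k1 : 0 < x1 → 0 ≤ x2 := by intro h; nlinarith [mul_nonneg hb h.le]
  have k2 : 0 < x1 + e1 → 0 ≤ x2 + e2 := by
    intro h; nlinarith [mul_nonneg hb h.le]
  simp only [cc, cu]
  split_ifs <;> omega

theorem chord_quad (γ : ℕ → ℤ × ℤ) (N : ℕ) (K a b : ℤ) (hK : 2 ≤ K) (ha : 0 < a) (hb : 0 ≤ b)
    (hadj : ∀ i < N, GridAdj (γ i) (γ (i + 1)))
    (hend : γ N = ((γ 0).1 + K * a, (γ 0).2 + K * b))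
    (hmax : ∀ i ≤ N, a * (γ i).2 - b * (γ i).1 ≤ a * (γ 0).2 - b * (γ 0).1) :
    ∃ i ≤ N, ∃ j ≤ N, γ i = ((γ j).1 + (K - 1) * a, (γ j).2 + (K - 1) * b) := by
  by_contra hno
  push Not at hno
  set G : ℕ → ℕ → ℤ × ℤ := fun i j =>
    ((γ j).1 - (γ i).1 + (K - 1) * a, (γ j).2 - (γ i).2 + (K - 1) * b) with hG
  have hG0 : ∀ i ≤ N, ∀ j ≤ N, ¬ ((G i j).1 = 0 ∧ (G i j).2 = 0) := by
    rintro i hi j hj ⟨h1, h2⟩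
    apply hno i hi j hj
    simp only [hG] at h1 h2
    ext <;> simp <;> linarith
  have hN1 : (γ N).1 = (γ 0).1 + K * a := by rw [hend]
  have hN2 : (γ N).2 = (γ 0).2 + K * b := by rw [hend]
  have hcell : ∀ i < N, ∀ j < N,
      cc (G (i+1) j) (G (i+1) (j+1)) =
        cc (G i j) (G i (j+1)) + (cc (G i (j+1)) (G (i+1) (j+1)) - cc (G i j) (G (i+1) j)) := by
    intro i hi j hj
    obtain ⟨f1, f2, hf, hf'⟩ := gridAdj_cases (hadj i hi)
    obtain ⟨e1, e2, he, he'⟩ := gridAdj_cases (hadj j hj)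
    have A : G i (j+1) = ((G i j).1 + e1, (G i j).2 + e2) := by
      simp only [hG, he]; ext <;> simp <;> ring
    have B : G (i+1) j = ((G i j).1 - f1, (G i j).2 - f2) := by
      simp only [hG, hf]; ext <;> simp <;> ring
    have C : G (i+1) (j+1) = ((G i j).1 + e1 - f1, (G i j).2 + e2 - f2) := by
      simp only [hG, he, hf]; ext <;> simp <;> ring
    have h0 := hG0 i hi.le j hj.le
    have h1 := hG0 i hi.le (j+1) hj
    have h2 := hG0 (i+1) hi j hj.le
    have h3 := hG0 (i+1) hi (j+1) hj
    rw [A] at h1; rw [B] at h2; rw [C] at h3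
    have := cc_cell _ _ _ _ _ _ he' hf' h0 h1 h2 h3
    rw [A, B, C]
    linarith
  have hq : ∀ j, (j = 0 ∨ j = N) → ∀ i < N, cc (G i j) (G (i+1) j) = 0 := by
    intro j hj i hi
    obtain ⟨f1, f2, hf, hf'⟩ := gridAdj_cases (hadj i hi)
    have B : G (i+1) j = ((G i j).1 + -f1, (G i j).2 + -f2) := by
      simp only [hG, hf]; ext <;> simp <;> ring
    have m1 := hmax i hi.le
    have m2 := hmax (i+1) hi
    rw [hf] at m2
    simp only at m2
    rw [B]
    refine cc_upper a b _ _ _ _ ha hb (by omega) ?_ ?_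
    · rcases hj with rfl | rfl <;> (try simp only [hG, hN1, hN2]) <;> linarith
    · rcases hj with rfl | rfl <;> (try simp only [hG, hN1, hN2]) <;> linarith
  have hr : ∀ i < N, ∑ j ∈ Finset.range N, cc (G (i+1) j) (G (i+1) (j+1)) =
      ∑ j ∈ Finset.range N, cc (G i j) (G i (j+1)) := by
    intro i hi
    rw [Finset.sum_congr rfl (fun j hj => hcell i hi j (Finset.mem_range.1 hj)),
      Finset.sum_add_distrib, Finset.sum_range_sub (fun j => cc (G i j) (G (i+1) j)),
      hq 0 (Or.inl rfl) i hi, hq N (Or.inr rfl) i hi]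
    simp
  have hr' : ∀ i ≤ N, ∑ j ∈ Finset.range N, cc (G i j) (G i (j+1)) =
      ∑ j ∈ Finset.range N, cc (G 0 j) (G 0 (j+1)) := by
    intro i
    induction i with
    | zero => intro _; rfl
    | succ i ih => intro hi; rw [hr i hi, ih (by omega)]
  have hrow : ∀ i, (i = 0 ∨ i = N) → ∑ j ∈ Finset.range N, cc (G i j) (G i (j+1)) =
      cg (G i N) - cg (G i 0) := by
    intro i hi
    rw [← Finset.sum_range_sub (fun j => cg (G i j))]
    refine Finset.sum_congr rfl fun j hj => ?_
    have hj := Finset.mem_range.1 hj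
    have hiN : i ≤ N := by omega
    obtain ⟨e1, e2, he, he'⟩ := gridAdj_cases (hadj j hj)
    have A : G i (j+1) = ((G i j).1 + e1, (G i j).2 + e2) := by
      simp only [hG, he]; ext <;> simp <;> ring
    have h0 := hG0 i hiN j hj.le
    have h1 := hG0 i hiN (j+1) hj
    have m1 := hmax j hj.le
    have m2 := hmax (j+1) hj
    rw [he] at m2
    simp only at m2
    rw [A] at h1
    rw [A]
    refine cc_lower a b _ _ _ _ ha hb he' h0 h1 ?_ ?_
    · rcases hi with rfl | rfl <;> (try simp only [hG, hN1, hN2]) <;> linarith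
    · rcases hi with rfl | rfl <;> (try simp only [hG, hN1, hN2]) <;> linarith
  have key := hr' N le_rfl
  rw [hrow N (Or.inr rfl), hrow 0 (Or.inl rfl)] at key
  have pos : ∀ c : ℤ, 0 < c → cg (c * a, c * b) = 1 := by
    intro c hc
    have := mul_pos hc ha
    have := mul_nonneg hc.le hb
    simp [cg, cu, *]
  have e1 : G N N = ((K-1) * a, (K-1) * b) := by simp [hG]
  have e2 : G 0 0 = ((K-1) * a, (K-1) * b) := by simp [hG]
  have e3 : G 0 N = ((2*K-1) * a, (2*K-1) * b) := by
    simp only [hG, hN1, hN2]; ext <;> simp <;> ring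
  have e4 : G N 0 = (-a, -b) := by
    simp only [hG, hN1, hN2]; ext <;> simp <;> ring
  have e5 : cg (-a, -b) = 0 := by
    simp only [cg, cu]; rw [if_neg (by simp; omega)]
  rw [e1, e2, e3, e4, e5, pos _ (by omega), pos _ (by omega)] at key
  omega

def rotz (p : ℤ × ℤ) : ℤ × ℤ := (-p.2, p.1)

def ChordProp (a b : ℤ) : Prop :=
  ∀ (γ : ℕ → ℤ × ℤ) (N : ℕ) (K : ℤ), 2 ≤ K →
    (∀ i < N, GridAdj (γ i) (γ (i + 1))) →
    γ N = ((γ 0).1 + K * a, (γ 0).2 + K * b) →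
    (∀ i ≤ N, a * (γ i).2 - b * (γ i).1 ≤ a * (γ 0).2 - b * (γ 0).1) →
    ∃ i ≤ N, ∃ j ≤ N, γ i = ((γ j).1 + (K - 1) * a, (γ j).2 + (K - 1) * b)

theorem chord_rot {a b : ℤ} (h : ChordProp (-b) a) : ChordProp a b := by
  intro γ N K hK hadj hend hmax
  have g1 : ∀ i < N, GridAdj (rotz (γ i)) (rotz (γ (i + 1))) := by
    intro i hi
    have h1 := hadj i hi
    have h2 : |-(γ i).2 - -(γ (i+1)).2| = |(γ i).2 - (γ (i+1)).2| := by
      rw [← abs_neg]; congr 1; ring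
    simp only [GridAdj, rotz] at *
    rw [h2, add_comm]; exact h1
  have g2 : rotz (γ N) = ((rotz (γ 0)).1 + K * -b, (rotz (γ 0)).2 + K * a) := by
    refine Prod.ext ?_ ?_ <;> simp only [rotz, hend] <;> ring
  have g3 : ∀ i ≤ N, -b * (rotz (γ i)).2 - a * (rotz (γ i)).1 ≤
      -b * (rotz (γ 0)).2 - a * (rotz (γ 0)).1 := by
    intro i hi
    have := hmax i hi
    simp only [rotz]; linarith
  obtain ⟨i, hi, j, hj, hij⟩ := h (fun i => rotz (γ i)) N K hK g1 g2 g3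
  refine ⟨i, hi, j, hj, ?_⟩
  simp only [rotz, Prod.mk.injEq] at hij
  ext
  · simp only; linarith [hij.1, hij.2]
  · simp only; linarith [hij.1, hij.2]

theorem chord_all {a b : ℤ} (h : ¬ (a = 0 ∧ b = 0)) : ChordProp a b := by
  have base : ∀ a b : ℤ, 0 < a → 0 ≤ b → ChordProp a b := by
    intro a b ha hb γ N K hK h1 h2 h3
    exact chord_quad γ N K a b hK ha hb h1 h2 h3
  by_cases h1 : 0 < a ∧ 0 ≤ b
  · exact base a b h1.1 h1.2
  apply chord_rot
  by_cases h2 : 0 < -b ∧ 0 ≤ a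
  · exact base _ _ h2.1 h2.2
  apply chord_rot
  by_cases h3 : 0 < -a ∧ 0 ≤ -b
  · exact base _ _ h3.1 h3.2
  apply chord_rot
  exact base _ _ (by omega) (by omega)

theorem rtg_seq {α : Type*} {r : α → α → Prop} {x y : α} (h : Relation.ReflTransGen r x y) :
    ∃ (n : ℕ) (f : ℕ → α), f 0 = x ∧ f n = y ∧ ∀ i < n, r (f i) (f (i + 1)) := by
  induction h with
  | refl => exact ⟨0, fun _ => x, rfl, rfl, by simp⟩
  | @tail b c _ hbc ih =>
    obtain ⟨n, f, h0, hn, hs⟩ := ih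
    refine ⟨n + 1, fun i => if i ≤ n then f i else c, by simpa using h0, by simp, ?_⟩
    intro i hi
    rcases Nat.lt_succ_iff_lt_or_eq.1 hi with h | rfl
    · simp only [if_pos h.le, if_pos (Nat.succ_le_of_lt h)]
      exact hs i h
    · simp [hn, hbc]

theorem seq_rtg {α : Type*} {r : α → α → Prop} {n : ℕ} {f : ℕ → α}
    (hs : ∀ i < n, r (f i) (f (i + 1))) (i j : ℕ) (hij : i ≤ j) (hj : j ≤ n) :
    Relation.ReflTransGen r (f i) (f j) := by
  induction j, hij using Nat.le_induction with
  | base => exact .refl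
  | succ k hk ih => exact (ih (by omega)).tail (hs k (by omega))

theorem comp_exists (S : Set (ℤ × ℤ)) (x : ℤ × ℤ) (hx : x ∈ S) :
    IsGridComponent S {y | Relation.ReflTransGen (fun a b => GridAdj a b ∧ a ∈ S ∧ b ∈ S) x y} := by
  set r := (fun a b => GridAdj a b ∧ a ∈ S ∧ b ∈ S) with hr
  have symm : ∀ a b, r a b → r b a := by
    rintro a b ⟨h, h1, h2⟩
    refine ⟨?_, h2, h1⟩
    unfold GridAdj at *
    rw [abs_sub_comm, abs_sub_comm b.2]; exact h
  have hin : ∀ y, Relation.ReflTransGen r x y → y ∈ S := by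
    intro y h
    cases h with
    | refl => exact hx
    | tail _ h => exact h.2.2
  have up : ∀ p q, Relation.ReflTransGen r p q → Relation.ReflTransGen r x p →
      Relation.ReflTransGen (fun a b => GridAdj a b ∧ a ∈ {y | Relation.ReflTransGen r x y} ∧
        b ∈ {y | Relation.ReflTransGen r x y}) p q := by
    intro p q h hp
    induction h with
    | refl => exact .refl
    | tail h1 h2 ih => exact ih.tail ⟨h2.1, hp.trans h1, (hp.trans h1).tail h2⟩
  refine ⟨hin, ⟨x, .refl⟩, ?_, ?_⟩
  · intro p hp q hq
    refine up p q (Relation.ReflTransGen.trans ?_ hq) hp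
    have hp' : Relation.ReflTransGen r x p := hp
    clear hp
    induction hp' with
    | refl => exact .refl
    | tail _ h2 ih => exact Relation.ReflTransGen.head (symm _ _ h2) ih
  · intro D hCD hDS hD
    refine Set.Subset.antisymm ?_ hCD
    intro y hy
    refine (hD x (hCD .refl) y hy).lift id ?_
    rintro a b ⟨h, h1, h2⟩
    exact ⟨h, hDS h1, hDS h2⟩

/-- last points of `S` on the lines in direction `v` -/
def lastPts (S : Set (ℤ × ℤ)) (v : ℤ × ℤ) : Set (ℤ × ℤ) :=
  {p | p ∈ S ∧ ∀ i : ℤ, 1 ≤ i → p + i • v ∉ S}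

def dstep (S : Set (ℤ × ℤ)) (v : ℤ × ℤ) (x y : ℤ × ℤ) : Prop :=
  GridAdj x y ∧ ∃ l m : ℤ, x - l • v ∈ lastPts S v ∧ y - m • v ∈ lastPts S v ∧
    (m = l ∨ m ≤ l - 2)

theorem last_uniq {S : Set (ℤ × ℤ)} {v x : ℤ × ℤ} {l m : ℤ}
    (h1 : x - l • v ∈ lastPts S v) (h2 : x - m • v ∈ lastPts S v) : l = m := by
  rcases lt_trichotomy l m with h | h | h
  · exfalso
    apply h2.2 (m - l) (by omega)
    convert h1.1 using 1
    rw [sub_smul]; abel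
  · exact h
  · exfalso
    apply h1.2 (l - m) (by omega)
    convert h2.1 using 1
    rw [sub_smul]; abel

theorem last_exists {S : Set (ℤ × ℤ)} (hS : S.Finite) {v : ℤ × ℤ} (hv : v ≠ 0) {p : ℤ × ℤ}
    (hp : p ∈ S) : ∃ k : ℤ, 0 ≤ k ∧ p + k • v ∈ lastPts S v := by
  have hinj : Function.Injective (fun k : ℤ => p + k • v) := by
    intro a b h
    exact smul_left_injective ℤ hv (add_left_cancel h)
  have hf : {k : ℤ | p + k • v ∈ S}.Finite := hS.preimage hinj.injOn
  obtain ⟨k, hk, hmax⟩ := Set.exists_max_image _ id hf ⟨0, by simpa using hp⟩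
  refine ⟨k, hmax 0 (by simpa using hp), hk, ?_⟩
  intro i hi hc
  have := hmax (k + i) (by
    show p + (k + i) • v ∈ S
    rw [add_smul, ← add_assoc]; exact hc)
  simp at this
  omega

theorem dstep_shift {S : Set (ℤ × ℤ)} {v x y : ℤ × ℤ} (j : ℤ) (h : dstep S v x y) :
    dstep S v (x + j • v) (y + j • v) := by
  obtain ⟨h, l, m, hl, hm, hlm⟩ := h
  refine ⟨by simpa [GridAdj] using h, l + j, m + j, ?_, ?_, by omega⟩
  · convert hl using 1; rw [add_smul]; abel
  · convert hm using 1; rw [add_smul]; abel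

theorem dreach_shift {S : Set (ℤ × ℤ)} {v x y : ℤ × ℤ} (j : ℤ)
    (h : Relation.ReflTransGen (dstep S v) x y) :
    Relation.ReflTransGen (dstep S v) (x + j • v) (y + j • v) :=
  h.lift (fun z => z + j • v) (fun _ _ h => dstep_shift j h)

theorem dreach_level {S : Set (ℤ × ℤ)} {v x y : ℤ × ℤ} {l : ℤ}
    (hx : x - l • v ∈ lastPts S v)
    (h : Relation.ReflTransGen (dstep S v) x y) :
    ∃ m, y - m • v ∈ lastPts S v ∧ (m = l ∨ m ≤ l - 2) := by
  induction h with
  | refl => exact ⟨l, hx, Or.inl rfl⟩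
  | tail _ hs ih =>
    obtain ⟨m, hm, hml⟩ := ih
    obtain ⟨_, l', m', h1, h2, h3⟩ := hs
    have := last_uniq hm h1
    exact ⟨m', h2, by omega⟩

theorem mem_tr {S : Set (ℤ × ℤ)} {v x : ℤ × ℤ} : x ∈ setTranslate S v ↔ x - v ∈ S := by
  constructor
  · rintro ⟨y, hy, rfl⟩; simpa using hy
  · intro h; exact ⟨x - v, h, by simp⟩

theorem no_descent (S : Set (ℤ × ℤ)) (hS : S.Finite) (hne : S.Nonempty) (v : ℤ × ℤ) (hv : v ≠ 0)
    (H : ∀ d ∈ lastPts S v, ∃ y, ∃ m : ℤ, y - m • v ∈ lastPts S v ∧ m < 0 ∧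
      Relation.ReflTransGen (dstep S v) d y) : False := by
  have hBfin : (lastPts S v).Finite := hS.subset fun x hx => hx.1
  obtain ⟨p, hp⟩ := hne
  obtain ⟨k0, _, hb0⟩ := last_exists hS hv hp
  set b0 := p + k0 • v
  -- a function on last points
  have H' : ∀ d : lastPts S v, ∃ e : lastPts S v, ∃ k : ℕ, 0 < k ∧
      Relation.ReflTransGen (dstep S v) d.1 (e.1 - (k : ℤ) • v) := by
    rintro ⟨d, hd⟩
    obtain ⟨y, m, hy, hm, hr⟩ := H d hd
    refine ⟨⟨_, hy⟩, (-m).toNat, by omega, ?_⟩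
    have : (((-m).toNat : ℕ) : ℤ) = -m := by omega
    simpa [this] using hr
  choose F κ hκ hF using H'
  have iter : ∀ (n : ℕ) (d : lastPts S v), ∃ k : ℕ, n ≤ k ∧
      Relation.ReflTransGen (dstep S v) d.1 ((F^[n] d).1 - (k : ℤ) • v) := by
    intro n
    induction n with
    | zero => intro d; exact ⟨0, le_rfl, by simpa using .refl⟩
    | succ n ih =>
      intro d
      obtain ⟨k, hk, hr⟩ := ih (F d)
      refine ⟨k + κ d, by have := hκ d; omega, (hF d).trans ?_⟩
      have := dreach_shift (-(κ d : ℤ)) hr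
      rw [Function.iterate_succ_apply]
      convert this using 1
      · rw [neg_smul]; abel
      · push_cast; rw [neg_smul, add_smul]; abel
  have ex : ∃ K : ℕ, 0 < K ∧ ∃ x, x ∈ lastPts S v ∧
      Relation.ReflTransGen (dstep S v) x (x - (K : ℤ) • v) := by
    have : Finite (lastPts S v) := hBfin
    obtain ⟨i, j, hij, he⟩ := Finite.exists_ne_map_eq_of_infinite
      (fun n : ℕ => F^[n] ⟨b0, hb0⟩)
    wlog h : i < j generalizing i j
    · exact this j i hij.symm he.symm (by omega)
    obtain ⟨k, hk, hr⟩ := iter (j - i) (F^[i] ⟨b0, hb0⟩)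
    rw [← Function.iterate_add_apply, Nat.sub_add_cancel h.le] at hr
    have he' : F^[i] ⟨b0, hb0⟩ = F^[j] ⟨b0, hb0⟩ := he
    rw [← he'] at hr
    exact ⟨k, by omega, _, (F^[i] ⟨b0, hb0⟩).2, hr⟩
  classical
  have hmin := fun {m} (hm : m < Nat.find ex) => Nat.find_min ex hm
  obtain ⟨hK0, hKx⟩ := Nat.find_spec ex
  generalize Nat.find ex = K at *
  let X : Set (ℤ × ℤ) := {x | x ∈ lastPts S v ∧
      Relation.ReflTransGen (dstep S v) x (x - (K : ℤ) • v)}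
  have hXfin : X.Finite := hBfin.subset fun x hx => hx.1
  obtain ⟨M, ⟨hMB, hMr⟩, hMmax⟩ := Set.exists_max_image X
    (fun x => -v.1 * x.2 + v.2 * x.1) hXfin hKx
  have hMB' : M - (0 : ℤ) • v ∈ lastPts S v := by simpa using hMB
  have hK2 : 2 ≤ (K : ℤ) := by
    obtain ⟨m, hm, hm'⟩ := dreach_level hMB' hMr
    have : m = -(K : ℤ) := by
      apply last_uniq hm
      rw [neg_smul]; simpa using hMB
    omega
  obtain ⟨N, γ, h0, hN, hs⟩ := rtg_seq hMr
  have hmem : ∀ i ≤ N, ∃ l : ℤ, γ i - l • v ∈ X := by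
    intro i hi
    have r1 : Relation.ReflTransGen (dstep S v) M (γ i) := h0 ▸ seq_rtg hs 0 i (by omega) hi
    have r2 : Relation.ReflTransGen (dstep S v) (γ i) (M - (K : ℤ) • v) :=
      hN ▸ seq_rtg hs i N hi le_rfl
    obtain ⟨l, hl, _⟩ := dreach_level hMB' r1
    refine ⟨l, hl, ?_⟩
    have r4 := dreach_shift (-(K : ℤ)) r1
    rw [neg_smul, ← sub_eq_add_neg] at r4
    have r3 := r2.trans r4
    have := dreach_shift (-l) r3
    convert this using 1
    · rw [neg_smul]; abel
    · rw [neg_smul]; abel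
  have hch : ChordProp (-v.1) (-v.2) := chord_all (by
    rintro ⟨h1, h2⟩
    apply hv
    ext <;> simp <;> omega)
  obtain ⟨i, hi, j, hj, hij⟩ := hch γ N K hK2 (fun i hi => (hs i hi).1) (by
      rw [hN, h0]; ext <;> simp <;> ring) (by
      intro i hi
      obtain ⟨l, hl⟩ := hmem i hi
      have := hMmax _ hl
      rw [h0]
      simp at this
      linarith)
  have hij' : γ i = γ j - ((K : ℤ) - 1) • v := by
    rw [hij]; ext <;> simp <;> ring
  obtain ⟨li, hli⟩ := hmem i hi
  obtain ⟨lj, hlj⟩ := hmem j hj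
  have hlev : li = lj - (K - 1) := by
    apply last_uniq hli.1
    rw [hij']
    convert hlj.1 using 1
    rw [sub_smul lj]; abel
  rcases le_total i j with hle | hle
  · obtain ⟨m, hm, hm'⟩ := dreach_level hli.1 (seq_rtg hs i j hle hj)
    have := last_uniq hm hlj.1
    omega
  · have r := seq_rtg hs j i hle hi
    refine hmin (m := K - 1) (by omega) ⟨by omega, γ j - lj • v, hlj.1, ?_⟩
    have := dreach_shift (-lj) r
    rw [hij'] at this
    convert this using 1
    · rw [neg_smul]; abel
    · rw [neg_smul]; push_cast [Nat.cast_sub (by omega : 1 ≤ K)]; abel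

/-- If `S₀` is a shape, `S₁ = S₀ + v` and `S₂ = S₁ + v` for a nonzero vector `v`,
then some connected component of `S₂ \ S₁` does not intersect `S₀`. -/
theorem shape_component_avoiding (S₀ : Set (ℤ × ℤ))
    (hfin : S₀.Finite) (hne : S₀.Nonempty) (hconn : GridConnected S₀)
    (v : ℤ × ℤ) (hv : v ≠ 0) :
    ∃ C : Set (ℤ × ℤ),
      IsGridComponent (setTranslate (setTranslate S₀ v) v \ setTranslate S₀ v) C ∧
      C ∩ S₀ = ∅ := by
  by_contra hcon
  push Not at hcon
  apply no_descent S₀ hfin hne v hv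
  intro d hd
  set E := setTranslate (setTranslate S₀ v) v \ setTranslate S₀ v with hE
  have memE : ∀ x, x ∈ E ↔ x - (2 : ℤ) • v ∈ S₀ ∧ x - v ∉ S₀ := by
    intro x
    rw [hE, Set.mem_sdiff, mem_tr, mem_tr, mem_tr, two_smul, sub_sub]
  have hdE : d + (2 : ℤ) • v ∈ E := by
    rw [memE]
    refine ⟨by simpa using hd.1, ?_⟩
    have := hd.2 1 le_rfl
    convert this using 2
    rw [two_smul, one_smul]; abel
  obtain ⟨z, hz, hzS⟩ := hcon _ (comp_exists E _ hdE)
  have claim : ∀ x, Relation.ReflTransGen (fun a b => GridAdj a b ∧ a ∈ E ∧ b ∈ E)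
      (d + (2 : ℤ) • v) x →
      (x - (2 : ℤ) • v ∈ lastPts S₀ v ∧
        Relation.ReflTransGen (dstep S₀ v) (d + (2 : ℤ) • v) x) ∨
      ∃ y, ∃ m : ℤ, y - m • v ∈ lastPts S₀ v ∧ m ≤ 0 ∧
        Relation.ReflTransGen (dstep S₀ v) (d + (2 : ℤ) • v) y := by
    intro x h
    induction h with
    | refl => left; exact ⟨by simpa using hd, .refl⟩
    | @tail b c _ hs ih =>
      rcases ih with ⟨hb, hr⟩ | h
      · have hc := (memE c).1 hs.2.2
        obtain ⟨k, hk, hkl⟩ := last_exists hfin hv hc.1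
        have e : c - (2 : ℤ) • v + k • v = c - (2 - k) • v := by
          rw [sub_smul]; abel
        rw [e] at hkl
        have hk1 : k ≠ 1 := by
          rintro rfl
          apply hc.2
          simpa using hkl.1
        rcases eq_or_ne k 0 with rfl | hk0
        · left
          simp only [sub_zero] at hkl
          exact ⟨hkl, hr.tail ⟨hs.1, 2, 2, hb, hkl, Or.inl rfl⟩⟩
        · right
          exact ⟨c, 2 - k, hkl, by omega, hr.tail ⟨hs.1, 2, 2 - k, hb, hkl, Or.inr (by omega)⟩⟩
      · exact Or.inr h
  rcases claim z hz with ⟨h, _⟩ | ⟨y, m, hy, hm, hr⟩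
  · exact absurd (by simpa using hzS) (h.2 2 (by norm_num))
  · refine ⟨y - (2 : ℤ) • v, m - 2, ?_, by omega, ?_⟩
    · convert hy using 1
      rw [sub_smul]; abel
    · have := dreach_shift (-2) hr
      convert this using 1
      · rw [neg_smul]; abel
      · rw [neg_smul]; abel
end

section
/- Let S₀ ⊂ ℤ² be a shape (a finite nonempty subset of ℤ² that is connected with respect to grid adjacency), let v ∈ ℤ² be a nonzero vector, and set S₁ = S₀ + v and S₂ = S₁ + v. Let C be a connected component of S₂ \ S₁ (with respect to grid adjacency), let p ∈ C ∩ S₀, and let n be the smallest positive integer such that p + n·v ∉ S₁ (such n exists since S₁ is finite). Then p + n·v ∈ S₂ \ S₁ and p + n·v does not belong to C, i.e., p + n·v lies in a connected component of S₂ \ S₁ different from C. -/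
lemma gridAdj_cases_s7 {a b : ℤ × ℤ} (h : GridAdj a b) :
    (b.1 = a.1 ∧ b.2 = a.2 + 1) ∨ (b.1 = a.1 ∧ b.2 = a.2 - 1) ∨
    (b.1 = a.1 + 1 ∧ b.2 = a.2) ∨ (b.1 = a.1 - 1 ∧ b.2 = a.2) := by
  unfold GridAdj at h
  rcases abs_cases (a.1 - b.1) with h1 | h1 <;> rcases abs_cases (a.2 - b.2) with h2 | h2 <;> omega

/-- signed number of crossings of the walk `q` with the upward ray from `x` -/
def crossF (q : ℕ → ℤ × ℤ) (M : ℕ) (x : ℤ × ℤ) : ℤ :=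
  ∑ i ∈ Finset.range M, ((if (q (i+1)).1 > x.1 then (1:ℤ) else 0) -
    (if (q i).1 > x.1 then 1 else 0)) * (if (q i).2 > x.2 then 1 else 0)

lemma crossF_up (q : ℕ → ℤ × ℤ) (M : ℕ) (hq : ∀ i < M, GridAdj (q i) (q (i+1)))
    (x y : ℤ × ℤ) (h1 : y.1 = x.1) (h2 : y.2 = x.2 + 1) (hy : ∀ i ≤ M, q i ≠ y) :
    crossF q M x = crossF q M y := by
  unfold crossF
  apply Finset.sum_congr rfl
  intro i hi
  have hi := Finset.mem_range.1 hi
  have a := gridAdj_cases_s7 (hq i hi)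
  have b := hy i (by omega)
  have c := hy (i+1) (by omega)
  rw [Ne, Prod.ext_iff] at b c
  rw [h1, h2] at *
  split_ifs <;> first | rfl | (exfalso; omega)

lemma crossF_right (q : ℕ → ℤ × ℤ) (M : ℕ) (hq : ∀ i < M, GridAdj (q i) (q (i+1)))
    (x y : ℤ × ℤ) (h1 : y.1 = x.1 + 1) (h2 : y.2 = x.2) (hy : ∀ i ≤ M, q i ≠ y)
    (e0 : (q 0).1 ≠ y.1) (e1 : (q M).1 ≠ y.1) :
    crossF q M x = crossF q M y := by
  have key : crossF q M x - crossF q M y =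
      ∑ i ∈ Finset.range M, ((if (q (i+1)).1 = y.1 ∧ (q (i+1)).2 > y.2 then (1:ℤ) else 0) -
        (if (q i).1 = y.1 ∧ (q i).2 > y.2 then (1:ℤ) else 0)) := by
    unfold crossF
    rw [← Finset.sum_sub_distrib]
    apply Finset.sum_congr rfl
    intro i hi
    have hi := Finset.mem_range.1 hi
    have a := gridAdj_cases_s7 (hq i hi)
    have b := hy i (by omega)
    have c := hy (i+1) (by omega)
    rw [Ne, Prod.ext_iff] at b c
    rw [h1, h2] at *
    split_ifs <;> first | rfl | (exfalso; omega)
  rw [Finset.sum_range_sub (fun i => if (q i).1 = y.1 ∧ (q i).2 > y.2 then (1:ℤ) else 0)] at key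
  simp only [e0, e1, false_and, if_false] at key
  omega

lemma crossF_adj (q : ℕ → ℤ × ℤ) (M : ℕ) (hq : ∀ i < M, GridAdj (q i) (q (i+1)))
    (x y : ℤ × ℤ) (hxy : GridAdj x y) (hx : ∀ i ≤ M, q i ≠ x) (hy : ∀ i ≤ M, q i ≠ y)
    (e0 : (q 0).1 ≠ y.1) (e1 : (q M).1 ≠ y.1)
    (f0 : (q 0).1 ≠ x.1) (f1 : (q M).1 ≠ x.1) :
    crossF q M x = crossF q M y := by
  rcases gridAdj_cases_s7 hxy with h | h | h | h
  · exact crossF_up q M hq x y h.1 h.2 hy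
  · exact (crossF_up q M hq y x h.1.symm (by omega) hx).symm
  · exact crossF_right q M hq x y h.1 h.2 hy e0 e1
  · exact (crossF_right q M hq y x (by omega) h.2.symm hx f0 f1).symm

lemma crossing (q : ℕ → ℤ × ℤ) (M : ℕ) (hq : ∀ i < M, GridAdj (q i) (q (i+1)))
    (p : ℕ → ℤ × ℤ) (N : ℕ) (hp : ∀ i < N, GridAdj (p i) (p (i+1)))
    (hcol : (∀ i ≤ N, (q 0).1 < (p i).1 ∧ (p i).1 < (q M).1) ∨
      (∀ i ≤ N, (q M).1 < (p i).1 ∧ (p i).1 < (q 0).1))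
    (hdis : ∀ j ≤ M, ∀ i ≤ N, q j ≠ p i)
    (s t : ℕ) (hs : s ≤ N) (ht : t ≤ N)
    (htop : ∀ j ≤ M, (q j).1 = (p s).1 → (q j).2 ≤ (p s).2)
    (hbot : ∀ j ≤ M, (q j).1 = (p t).1 → (p t).2 ≤ (q j).2) : False := by
  have hc : ∀ i ≤ N, (q 0).1 ≠ (p i).1 ∧ (q M).1 ≠ (p i).1 := by
    intro i hi
    rcases hcol with h | h <;> have := h i hi <;> omega
  have hconst : ∀ i ≤ N, crossF q M (p i) = crossF q M (p 0) := by
    intro i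
    induction i with
    | zero => intro _; rfl
    | succ i ih =>
      intro hi
      rw [← ih (by omega)]
      exact (crossF_adj q M hq _ _ (hp i (by omega)) (fun j hj => hdis j hj _ (by omega))
        (fun j hj => hdis j hj _ hi) (hc _ hi).1 (hc _ hi).2 (hc i (by omega)).1
        (hc i (by omega)).2).symm
  have h0 : crossF q M (p s) = 0 := by
    unfold crossF
    apply Finset.sum_eq_zero
    intro i hi
    have hi := Finset.mem_range.1 hi
    have a := gridAdj_cases_s7 (hq i hi)
    have b := htop i (by omega)
    have c := htop (i+1) (by omega)
    split_ifs <;> first | rfl | (exfalso; omega)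
  have h1 : crossF q M (p t) = (if (q M).1 > (p t).1 then (1:ℤ) else 0) -
      (if (q 0).1 > (p t).1 then (1:ℤ) else 0) := by
    rw [← Finset.sum_range_sub (fun i => if (q i).1 > (p t).1 then (1:ℤ) else 0)]
    unfold crossF
    apply Finset.sum_congr rfl
    intro i hi
    have hi := Finset.mem_range.1 hi
    have a := gridAdj_cases_s7 (hq i hi)
    have b := hbot i (by omega)
    have c := hbot (i+1) (by omega)
    have d := hdis i (by omega) t ht
    have e := hdis (i+1) (by omega) t ht
    rw [Ne, Prod.ext_iff] at d e
    split_ifs <;> first | rfl | (exfalso; omega)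
  have h2 := hconst s hs
  have h3 := hconst t ht
  rw [h0] at h2
  rw [h1, ← h2] at h3
  rcases hcol with h | h <;> have := h t ht <;> split_ifs at h3 <;> omega

lemma walk_col (w : ℕ → ℤ × ℤ) (N : ℕ) (hw : ∀ i < N, GridAdj (w i) (w (i+1))) :
    ∀ i ≤ N, |(w i).1 - (w 0).1| ≤ i := by
  intro i
  induction i with
  | zero => simp
  | succ i ih =>
    intro hi
    have a := ih (by omega)
    have b := gridAdj_cases_s7 (hw i (by omega))
    rw [abs_le] at *
    push_cast
    omega

lemma core (v : ℤ × ℤ) (hv : v.1 ≠ 0) (w : ℕ → ℤ × ℤ) (N : ℕ)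
    (hw : ∀ i < N, GridAdj (w i) (w (i+1))) (k : ℤ) (hk : 2 ≤ |k|)
    (hN : w N = w 0 + k • v)
    (hmin : ∀ i j, i < j → j ≤ N → ∀ s : ℤ, s ≠ 0 → w j = w i + s • v → i = 0 ∧ j = N) :
    False := by
  have hk0 : k ≠ 0 := by rintro rfl; simp at hk
  have hN1 : (w N).1 = (w 0).1 + k * v.1 := by simp [hN]
  have hN2 : (w N).2 = (w 0).2 + k * v.2 := by simp [hN]
  have hNpos : 0 < N := by
    rcases Nat.eq_zero_or_pos N with h | h
    · subst h
      have : k * v.1 ≠ 0 := mul_ne_zero hk0 hv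
      omega
    · exact h
  have hinj : ∀ i ≤ N, ∀ j ≤ N, ∀ s : ℤ, w j = w i + s • v → s = 0 ∨ s = k ∨ s = -k := by
    intro i hi j hj s h
    by_contra! hs
    have h1 : (w j).1 = (w i).1 + s * v.1 := by simp [h]
    rcases lt_trichotomy i j with hij | hij | hij
    · obtain ⟨rfl, rfl⟩ := hmin i j hij hj s hs.1 h
      have : s * v.1 = k * v.1 := by omega
      exact hs.2.1 (mul_right_cancel₀ hv this)
    · subst hij
      have : s * v.1 = 0 := by omega
      exact (mul_ne_zero hs.1 hv) this
    · obtain ⟨rfl, rfl⟩ := hmin j i hij hi (-s) (by omega) (by rw [h]; simp)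
      have : s * v.1 = (-k) * v.1 := by rw [neg_mul]; omega
      exact hs.2.2 (mul_right_cancel₀ hv this)
  set J : ℕ := N + v.1.natAbs + 1 with hJ
  set c : ℕ → ℤ := fun t => ((t / N : ℕ) - (J:ℤ)) * k + 1 with hc
  set q : ℕ → ℤ × ℤ := fun t => w (t % N) + c t • v with hqdef
  have hq : ∀ i < 2 * J * N, GridAdj (q i) (q (i+1)) := by
    intro i _
    have hlt := Nat.mod_lt i hNpos
    have ha := hw (i % N) hlt
    have hstep : q (i+1) = w (i % N + 1) + c i • v := by
      have hi := Nat.div_add_mod i N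
      by_cases h : i % N + 1 < N
      · have e1 : (i+1) % N = i % N + 1 := by
          conv_lhs => rw [← hi]
          rw [add_assoc, Nat.mul_add_mod, Nat.mod_eq_of_lt h]
        have e2 : (i+1) / N = i / N := by
          conv_lhs => rw [← hi]
          rw [add_assoc, Nat.mul_add_div hNpos, Nat.div_eq_of_lt h, add_zero]
        simp only [hqdef, hc, e1, e2]
      · have hh : i % N + 1 = N := by omega
        have e0 : i + 1 = N * (i / N + 1) := by
          rw [mul_add, mul_one]; omega
        have e1 : (i+1) % N = 0 := by rw [e0]; simp
        have e2 : (i+1) / N = i / N + 1 := by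
          rw [e0, Nat.mul_div_cancel_left _ hNpos]
        simp only [hqdef, hc, e1, e2, hh, hN]
        rw [add_assoc, ← add_smul]
        congr 2
        push_cast
        ring
    rw [hstep]
    unfold GridAdj at *
    simpa [hqdef] using ha
  have hdis : ∀ j ≤ 2 * J * N, ∀ i ≤ N, q j ≠ w i := by
    intro j _ i hi h
    have hlt := Nat.mod_lt j hNpos
    have key := hinj (j % N) hlt.le i hi (c j) h.symm
    have hdvd : k ∣ 1 := by
      have e : (1:ℤ) = c j - ((j / N : ℕ) - (J:ℤ)) * k := by simp only [hc]; ring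
      rw [e]
      apply dvd_sub _ (Dvd.intro_left _ rfl)
      rcases key with h | h | h <;> rw [h] <;> simp
    have := Int.isUnit_iff_abs_eq.1 (isUnit_of_dvd_one hdvd)
    omega
  set h : ℤ × ℤ → ℤ := fun x => v.1 * (v.1 * x.2 - v.2 * x.1) with hh
  have hinv : ∀ t, h (q t) = h (w (t % N)) := by
    intro t
    simp only [hh, hqdef, Prod.fst_add, Prod.snd_add, Prod.smul_fst, Prod.smul_snd, smul_eq_mul]
    ring
  have hsq : 0 < v.1 * v.1 := mul_self_pos.2 hv
  obtain ⟨s, hs, hsmax⟩ := Finset.exists_max_image (Finset.range (N+1)) (fun i => h (w i)) ⟨0, by simp⟩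
  obtain ⟨t, ht, htmin⟩ := Finset.exists_min_image (Finset.range (N+1)) (fun i => h (w i)) ⟨0, by simp⟩
  rw [Finset.mem_range] at hs ht
  have hcmp : ∀ x y : ℤ × ℤ, x.1 = y.1 → h x ≤ h y → x.2 ≤ y.2 := by
    intro x y e hle
    simp only [hh, e] at hle
    by_contra! hlt
    nlinarith
  have hq0 : (q 0).1 = (w 0).1 - J * (k * v.1) + v.1 := by
    simp [hqdef, hc]; ring
  have hqM : (q (2 * J * N)).1 = (w 0).1 + J * (k * v.1) + v.1 := by
    have e1 : (2 * J * N) % N = 0 := Nat.mul_mod_left _ _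
    have e2 : (2 * J * N) / N = 2 * J := Nat.mul_div_cancel _ hNpos
    simp only [hqdef, hc, e1, e2, Prod.fst_add, Prod.smul_fst, smul_eq_mul]
    push_cast
    ring
  refine crossing q (2*J*N) hq w N hw ?_ hdis s t (by omega) (by omega) ?_ ?_
  · have hJv : (J:ℤ) = N + |v.1| + 1 := by rw [hJ]; push_cast; rfl
    have hb := walk_col w N hw
    have hne : k * v.1 ≠ 0 := mul_ne_zero hk0 hv
    have hJ0 : (0:ℤ) ≤ J := by positivity
    have hv1 := abs_le.1 (le_refl |v.1|)
    rcases lt_or_gt_of_ne hne with hl | hl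
    · right
      intro i hi
      have hbi := abs_le.1 (hb i hi)
      have : (J:ℤ) * (k * v.1) ≤ -J := by nlinarith
      rw [hq0, hqM]
      constructor <;> omega
    · left
      intro i hi
      have hbi := abs_le.1 (hb i hi)
      have : (J:ℤ) * (k * v.1) ≥ J := by nlinarith
      rw [hq0, hqM]
      constructor <;> omega
  · intro j _ e
    apply hcmp _ _ e
    rw [hinv]
    exact hsmax _ (Finset.mem_range.2 (by have := Nat.mod_lt j hNpos; omega))
  · intro j _ e
    apply hcmp _ _ e.symm
    rw [hinv]
    exact htmin _ (Finset.mem_range.2 (by have := Nat.mod_lt j hNpos; omega))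

lemma core' (v : ℤ × ℤ) (hv : v ≠ 0) (w : ℕ → ℤ × ℤ) (N : ℕ)
    (hw : ∀ i < N, GridAdj (w i) (w (i+1))) (k : ℤ) (hk : 2 ≤ |k|)
    (hN : w N = w 0 + k • v)
    (hmin : ∀ i j, i < j → j ≤ N → ∀ s : ℤ, s ≠ 0 → w j = w i + s • v → i = 0 ∧ j = N) :
    False := by
  by_cases h1 : v.1 = 0
  · have h2 : v.2 ≠ 0 := fun h2 => hv (Prod.ext h1 h2)
    refine core v.swap h2 (fun i => (w i).swap) N ?_ k hk ?_ ?_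
    · intro i hi
      have := hw i hi
      unfold GridAdj at *
      simp only [Prod.fst_swap, Prod.snd_swap]
      omega
    · simp only [hN]; rfl
    · intro i j hij hj s hs e
      exact hmin i j hij hj s hs (Prod.swap_injective e)
  · exact core v h1 w N hw k hk hN hmin

lemma chord (v : ℤ × ℤ) (hv : v ≠ 0) (N : ℕ) : ∀ (w : ℕ → ℤ × ℤ)
    (_ : ∀ i < N, GridAdj (w i) (w (i+1))) (k : ℤ) (_ : k ≠ 0)
    (_ : w N = w 0 + k • v), ∃ i ≤ N, ∃ j ≤ N, w j = w i + v := by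
  induction N using Nat.strong_induction_on with
  | _ N ih =>
  intro w hw k hk hN
  by_cases hmin : ∀ i j, i < j → j ≤ N → ∀ s : ℤ, s ≠ 0 → w j = w i + s • v → i = 0 ∧ j = N
  · by_cases hk2 : 2 ≤ |k|
    · exact (core' v hv w N hw k hk2 hN hmin).elim
    · have : k = 1 ∨ k = -1 := by
        rcases abs_cases k with h | h <;> omega
      rcases this with rfl | rfl
      · exact ⟨0, by omega, N, le_rfl, by simpa using hN⟩
      · exact ⟨N, le_rfl, 0, by omega, by simp [hN]⟩
  · push Not at hmin
    obtain ⟨i, j, hij, hj, s, hs, e, hne⟩ := hmin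
    obtain ⟨a, ha, b, hb, hab⟩ := ih (j - i) (by by_contra hcon; exact hne (by omega) (by omega))
      (fun t => w (i + t))
      (fun t ht => hw (i + t) (by omega)) s hs (by
        have : i + (j - i) = j := by omega
        simpa [this] using e)
    exact ⟨i + a, by omega, i + b, by omega, hab⟩

lemma exists_walk (C : Set (ℤ × ℤ)) (p q : ℤ × ℤ) (hp : p ∈ C)
    (h : Relation.ReflTransGen (fun a b => GridAdj a b ∧ a ∈ C ∧ b ∈ C) p q) :
    ∃ (N : ℕ) (w : ℕ → ℤ × ℤ), w 0 = p ∧ w N = q ∧ (∀ i ≤ N, w i ∈ C) ∧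
      ∀ i < N, GridAdj (w i) (w (i+1)) := by
  induction h with
  | refl => exact ⟨0, fun _ => p, rfl, rfl, fun _ _ => hp, fun i hi => by omega⟩
  | @tail b c _ hbc ih =>
    obtain ⟨N, w, h0, hN, hC, hw⟩ := ih
    refine ⟨N + 1, fun i => if i ≤ N then w i else c, by simp [h0], by simp, ?_, ?_⟩
    · intro i _
      by_cases h : i ≤ N
      · simp only [h, if_true]; exact hC i h
      · simp only [h, if_false]; exact hbc.2.2
    · intro i hi
      have h : i ≤ N := by omega
      by_cases h' : i + 1 ≤ N
      · simp only [h, h', if_true]; exact hw i (by omega)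
      · have : i = N := by omega
        subst this
        simp only [le_refl, if_true, h', if_false, hN]
        exact hbc.1

/-- Let `S₀` be a shape, `S₁ = S₀ + v`, `S₂ = S₁ + v` with `v ≠ 0`. If `C` is a
connected component of `S₂ \ S₁`, `p ∈ C ∩ S₀`, and `n` is the smallest positive
integer with `p + n • v ∉ S₁`, then `p + n • v ∈ S₂ \ S₁` and `p + n • v ∉ C`. -/
theorem jump_leaves_component (S₀ S₁ S₂ : Set (ℤ × ℤ))
    (hfin : S₀.Finite) (hne : S₀.Nonempty) (hconn : GridConnected S₀)
    (v : ℤ × ℤ) (hv : v ≠ 0)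
    (hS₁ : S₁ = setTranslate S₀ v) (hS₂ : S₂ = setTranslate S₁ v)
    (C : Set (ℤ × ℤ)) (hC : IsGridComponent (S₂ \ S₁) C)
    (p : ℤ × ℤ) (hpC : p ∈ C) (hpS₀ : p ∈ S₀)
    (n : ℕ) (hn : 1 ≤ n) (hnmem : p + n • v ∉ S₁)
    (hmin : ∀ m : ℕ, 1 ≤ m → m < n → p + m • v ∈ S₁) :
    p + n • v ∈ S₂ \ S₁ ∧ p + n • v ∉ C := by
  subst hS₁ hS₂
  have hpC' := hC.1 hpC
  have h2 : 2 ≤ n := by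
    by_contra hcon
    have : n = 1 := by omega
    subst this
    exact hnmem ⟨p, hpS₀, by simp⟩
  refine ⟨⟨⟨p + (n - 1) • v, hmin (n - 1) (by omega) (by omega), ?_⟩, hnmem⟩, ?_⟩
  · obtain ⟨m, rfl⟩ : ∃ m, n = m + 1 := ⟨n - 1, by omega⟩
    simp [add_smul, add_assoc]
  · intro hq
    obtain ⟨N, w, h0, hN, hwC, hw⟩ := exists_walk C p _ hpC (hC.2.2.1 p hpC _ hq)
    obtain ⟨i, hi, j, hj, e⟩ := chord v hv N w hw (n : ℤ) (by omega) (by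
      rw [hN, h0, natCast_zsmul])
    obtain ⟨y, hy, hye⟩ := (hC.1 (hwC j hj)).1
    apply (hC.1 (hwC i hi)).2
    have : y = w i := add_right_cancel (hye.trans e)
    rwa [← this]
end
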